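/- Let A = [a_1, ..., a_n] ∈ ℝ^{m×n} be nonzero and let (B, N) be the canonical partition of {1,...,n} (B ∪ N = {1,...,n}, B ∩ N = ∅, A_B x_B = 0 with x_B > 0 is feasible, and A_N^T y > 0, A_B^T y = 0 is feasible). If B ≠ ∅ and L := span(A_B) = {0} (i.e., all columns indexed by B are zero), then φ(A) ≥ ρ_N(A), where ρ_N(A) := max_{z ∈ ℝ^m, ‖z‖₂=1} min_{i ∈ N} ⟨a_i, z⟩. -/

import Mathlib

/-!
A zero column of `A` makes `0` available as the point `A v`, so rescaling to the simplex any weight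
`w ≥ 0` with `A w = A x` and `S(w) ⊆ S(x)` shows that `λ = ‖A x‖ / ‖w‖₁` is feasible for `φ(A, x)`.
Take `w` to be `x` with the weights of all zero columns removed. If `ρ ≤ ⟪a i, z⟫` for every nonzero
column `a i` and `‖z‖ ≤ 1`, then Cauchy-Schwarz gives `ρ ‖w‖₁ ≤ ⟪A w, z⟫ ≤ ‖A x‖`.
-/

open scoped RealInnerProductSpace BigOperators

/-- `comb a x = A x`, the combination `∑ i, x i • a i` of the columns `a i` of `A`. -/
noncomputable def comb {m n : ℕ} (a : Fin n → EuclideanSpace ℝ (Fin m)) (x : Fin n → ℝ) :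
    EuclideanSpace ℝ (Fin m) := ∑ i, x i • a i

/-- `φ(A, x) = sup {λ > 0 : ∃ u v ∈ Δ_{n-1}, S(u) ⊆ S(x), Au - Av = (λ/‖Ax‖) Ax}`. -/
noncomputable def phiAt {m n : ℕ} (a : Fin n → EuclideanSpace ℝ (Fin m))
    (x : Fin n → ℝ) : ℝ :=
  sSup {lam : ℝ | 0 < lam ∧ ∃ u ∈ stdSimplex ℝ (Fin n), ∃ v ∈ stdSimplex ℝ (Fin n),
    (∀ i, 0 < u i → 0 < x i) ∧
    comb a u - comb a v = (lam / ‖comb a x‖) • comb a x}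

/-- The restricted width `φ(A) = min {φ(A, x) : x ≥ 0, Ax ≠ 0}`. -/
noncomputable def phi {m n : ℕ} (a : Fin n → EuclideanSpace ℝ (Fin m)) : ℝ :=
  sInf {t : ℝ | ∃ x : Fin n → ℝ, (∀ i, 0 ≤ x i) ∧ comb a x ≠ 0 ∧ t = phiAt a x}

theorem sInf_setOf_exists_mem_eq_le {ι α : Type*} [ConditionallyCompleteLinearOrder α]
    {s : Finset ι} (f : ι → α) {i : ι} (hi : i ∈ s) : sInf {t | ∃ j ∈ s, t = f j} ≤ f i := by
  have himage : {t | ∃ j ∈ s, t = f j} = f '' (s : Set ι) := by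
    ext t
    simp [eq_comm]
  rw [himage]
  exact csInf_le (s.finite_toSet.image f).bddBelow (Set.mem_image_of_mem f hi)

section Comb

variable {m n : ℕ} (a : Fin n → EuclideanSpace ℝ (Fin m))

theorem comb_eq_linearCombination (x : Fin n → ℝ) :
    comb a x = Fintype.linearCombination ℝ a x := rfl

theorem comb_single (i : Fin n) (c : ℝ) : comb a (Pi.single i c) = c • a i := by
  rw [comb_eq_linearCombination, Fintype.linearCombination_apply_single]

theorem comb_smul (c : ℝ) (x : Fin n → ℝ) : comb a (c • x) = c • comb a x := by
  simp only [comb_eq_linearCombination, map_smul]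

theorem inner_comb_left (x : Fin n → ℝ) (z : EuclideanSpace ℝ (Fin m)) :
    ⟪comb a x, z⟫ = ∑ i, x i * ⟪a i, z⟫ := by
  simp only [comb, sum_inner, real_inner_smul_left]

theorem norm_comb_le_of_mem_stdSimplex {u : Fin n → ℝ} (hu : u ∈ stdSimplex ℝ (Fin n)) :
    ‖comb a u‖ ≤ ∑ i, ‖a i‖ := by
  refine norm_sum_le_of_le _ fun i _ => ?_
  have hui : u i ∈ Set.Icc (0 : ℝ) 1 := mem_Icc_of_mem_stdSimplex hu i
  rw [norm_smul, Real.norm_of_nonneg hui.1]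
  exact mul_le_of_le_one_left (norm_nonneg _) hui.2

variable {a}

theorem comb_congr {x y : Fin n → ℝ} (h : ∀ i, a i ≠ 0 → x i = y i) :
    comb a x = comb a y := by
  refine Finset.sum_congr rfl fun i _ => ?_
  by_cases hi : a i = 0
  · rw [hi, smul_zero, smul_zero]
  · rw [h i hi]

theorem sum_pos_of_comb_ne_zero {x : Fin n → ℝ} (hx : 0 ≤ x) (h : comb a x ≠ 0) :
    0 < ∑ i, x i := by
  refine Fintype.sum_pos (lt_of_le_of_ne hx ?_)
  rintro rfl
  exact h (by rw [comb_eq_linearCombination, map_zero])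

theorem mul_sum_le_norm_comb {x : Fin n → ℝ} {z : EuclideanSpace ℝ (Fin m)} {ρ : ℝ}
    (hx : 0 ≤ x) (hz : ‖z‖ ≤ 1) (hρ : ∀ i, x i ≠ 0 → ρ ≤ ⟪a i, z⟫) :
    ρ * ∑ i, x i ≤ ‖comb a x‖ := by
  have hterm (i : Fin n) : ρ * x i ≤ x i * ⟪a i, z⟫ := by
    by_cases hi : x i = 0
    · simp only [hi, mul_zero, zero_mul, le_refl]
    · rw [mul_comm]
      exact mul_le_mul_of_nonneg_left (hρ i hi) (hx i)
  calc ρ * ∑ i, x i = ∑ i, ρ * x i := Finset.mul_sum _ _ _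
    _ ≤ ∑ i, x i * ⟪a i, z⟫ := Finset.sum_le_sum fun i _ => hterm i
    _ = ⟪comb a x, z⟫ := (inner_comb_left a x z).symm
    _ ≤ ‖comb a x‖ * ‖z‖ := real_inner_le_norm _ _
    _ ≤ ‖comb a x‖ := mul_le_of_le_one_right (norm_nonneg _) hz

end Comb

section RestrictedWidth

variable {m n : ℕ} {a : Fin n → EuclideanSpace ℝ (Fin m)}

theorem le_phiAt_of_comb_sub_comb_eq {x u v : Fin n → ℝ} {lam : ℝ} (hx : comb a x ≠ 0)
    (hlam : 0 < lam) (hu : u ∈ stdSimplex ℝ (Fin n)) (hv : v ∈ stdSimplex ℝ (Fin n))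
    (hsupp : ∀ i, 0 < u i → 0 < x i)
    (huv : comb a u - comb a v = (lam / ‖comb a x‖) • comb a x) : lam ≤ phiAt a x := by
  refine le_csSup ⟨∑ i, ‖a i‖ + ∑ i, ‖a i‖, ?_⟩ ⟨hlam, u, hu, v, hv, hsupp, huv⟩
  rintro μ ⟨hμ, u', hu', v', hv', -, huv'⟩
  have hnorm : ‖comb a u' - comb a v'‖ = μ := by
    rw [huv', norm_smul, norm_div, norm_norm, div_mul_cancel₀ _ (norm_ne_zero_iff.2 hx),
      Real.norm_of_nonneg hμ.le]
  calc μ = ‖comb a u' - comb a v'‖ := hnorm.symm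
    _ ≤ ‖comb a u'‖ + ‖comb a v'‖ := norm_sub_le _ _
    _ ≤ ∑ i, ‖a i‖ + ∑ i, ‖a i‖ :=
      add_le_add (norm_comb_le_of_mem_stdSimplex a hu') (norm_comb_le_of_mem_stdSimplex a hv')

theorem norm_comb_div_sum_le_phiAt {b : Fin n} (hb : a b = 0) {w x : Fin n → ℝ} (hw : 0 ≤ w)
    (hsupp : ∀ i, 0 < w i → 0 < x i) (hwx : comb a w = comb a x) (hx : comb a x ≠ 0) :
    ‖comb a x‖ / ∑ i, w i ≤ phiAt a x := by
  have hsum : 0 < ∑ i, w i := sum_pos_of_comb_ne_zero hw (hwx ▸ hx)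
  have hmem : (∑ i, w i)⁻¹ • w ∈ stdSimplex ℝ (Fin n) := by
    refine ⟨smul_nonneg (inv_nonneg.2 hsum.le) hw, ?_⟩
    simp only [Pi.smul_apply, smul_eq_mul, ← Finset.mul_sum, inv_mul_cancel₀ hsum.ne']
  refine le_phiAt_of_comb_sub_comb_eq hx (div_pos (norm_pos_iff.2 hx) hsum) hmem
    (single_mem_stdSimplex ℝ b)
    (fun i hi => hsupp i (pos_of_mul_pos_right hi (inv_nonneg.2 hsum.le))) ?_
  rw [comb_smul, comb_single, hb, smul_zero, sub_zero, hwx, div_right_comm,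
    div_self (norm_ne_zero_iff.2 hx), one_div]

theorem le_phiAt_of_forall_le_inner {b : Fin n} (hb : a b = 0) {x : Fin n → ℝ}
    (hx : 0 ≤ x) (hax : comb a x ≠ 0) {z : EuclideanSpace ℝ (Fin m)} (hz : ‖z‖ ≤ 1) {ρ : ℝ}
    (hρ : ∀ i, a i ≠ 0 → ρ ≤ ⟪a i, z⟫) : ρ ≤ phiAt a x := by
  let w : Fin n → ℝ := (Function.support a).indicator x
  have hw : 0 ≤ w := Set.indicator_nonneg fun i _ => hx i
  have hsupp (i : Fin n) (hi : 0 < w i) : 0 < x i :=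
    hi.trans_le (Set.indicator_le_self' (fun j _ => hx j) i)
  have hwx : comb a w = comb a x :=
    comb_congr fun _ hi => Set.indicator_of_mem (Function.mem_support.2 hi) x
  have hbound : ρ * ∑ i, w i ≤ ‖comb a w‖ :=
    mul_sum_le_norm_comb hw hz fun i hi => hρ i (Set.mem_of_indicator_ne_zero hi)
  calc ρ ≤ ‖comb a x‖ / ∑ i, w i :=
        (le_div_iff₀ (sum_pos_of_comb_ne_zero hw (hwx ▸ hax))).2 (hwx ▸ hbound)
    _ ≤ phiAt a x := norm_comb_div_sum_le_phiAt hb hw hsupp hwx hax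

theorem le_phi_of_forall_le_phiAt (ha : a ≠ 0) {ρ : ℝ}
    (hρ : ∀ x, 0 ≤ x → comb a x ≠ 0 → ρ ≤ phiAt a x) : ρ ≤ phi a := by
  obtain ⟨i, hi⟩ := Function.ne_iff.1 ha
  have hsingle : (0 : Fin n → ℝ) ≤ Pi.single i 1 := Pi.single_nonneg.2 zero_le_one
  refine le_csInf ⟨_, Pi.single i 1, hsingle, ?_, rfl⟩ ?_
  · rwa [comb_single, one_smul]
  · rintro _ ⟨x, hx, hax, rfl⟩
    exact hρ x hx hax

end RestrictedWidth

/-- for the canonical partition `(B, N)` of a nonzero matrix `A`, if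
`B ≠ ∅` and `L := span(A_B) = {0}` (all columns indexed by `B` are zero), then
`φ(A) ≥ ρ_N(A)`, where `ρ_N(A) = max_{‖z‖=1} min_{i ∈ N} ⟪a i, z⟫`. -/
theorem stmt17 (m n : ℕ) (hn : 0 < n) (a : Fin n → EuclideanSpace ℝ (Fin m))
    (hA : ∃ i, a i ≠ 0) (B N : Finset (Fin n))
    (hBN : B ∪ N = Finset.univ) (hdisj : B ∩ N = ∅)
    (hB : ∃ xB : Fin n → ℝ, (∀ i ∈ B, 0 < xB i) ∧ ∑ i ∈ B, xB i • a i = 0)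
    (hN : ∃ y : EuclideanSpace ℝ (Fin m),
      (∀ i ∈ N, 0 < ⟪a i, y⟫) ∧ ∀ i ∈ B, ⟪a i, y⟫ = 0)
    (hBne : B.Nonempty)
    (hL : Submodule.span ℝ (a '' (B : Set (Fin n))) = ⊥) (ρN : ℝ)
    (hρN : IsGreatest
      {t : ℝ | ∃ z : EuclideanSpace ℝ (Fin m), ‖z‖ = 1 ∧
        t = sInf {s : ℝ | ∃ i ∈ N, s = ⟪a i, z⟫}} ρN) :
    ρN ≤ phi a := by
  have hzero : ∀ i ∈ B, a i = 0 := fun i hi =>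
    Submodule.span_eq_bot.1 hL (a i) (Set.mem_image_of_mem a hi)
  obtain ⟨b, hb⟩ := hBne
  obtain ⟨⟨z, hz, rfl⟩, -⟩ := hρN
  refine le_phi_of_forall_le_phiAt (Function.ne_iff.2 hA) fun x hx hax =>
    le_phiAt_of_forall_le_inner (hzero b hb) hx hax hz.le fun i hi => ?_
  have hiN : i ∈ N := (Finset.mem_union.1 (hBN ▸ Finset.mem_univ i)).resolve_left
    fun hiB => hi (hzero i hiB)
  exact sInf_setOf_exists_mem_eq_le (fun j => ⟪a j, z⟫) hiN
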